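/- For every n ≥ 1 and every 1 ≤ m ≤ n, the set Γ_m := {k ∈ ℝⁿ : σ_j(k) > 0 for all 1 ≤ j ≤ m} equals the connected component of the open set {k ∈ ℝⁿ : σ_m(k) > 0} that contains the positive orthant Γ_n = {k ∈ ℝⁿ : k₁ > 0, …, k_n > 0} (equivalently, the connected component containing the point (1, 1, …, 1)). -/

import Mathlib

/-!
Write `P_k = ∏ (X + k_i)`, whose coefficient at `X ^ (n - j)` is `σ_j(k)`. Since `P_{k + t𝟙}` is the
Taylor shift of `P_k` by `t`, the function `t ↦ σ_j(k + t𝟙)` is the polynomial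
`Q_j = P_k^{(n - j)} / (n - j)!` (a Hasse derivative), and its coefficient at `t ^ (j - i)` is a
positive multiple of `σ_i(k)`, for `i ≤ j`.

* `Γ_m` is star-shaped about `𝟙 = (1, …, 1)`: for `k ∈ Γ_m`, every `Q_j` with `j ≤ m` has
  nonnegative coefficients and a positive constant term, so `k + t𝟙 ∈ Γ_m` for `t ≥ 0`, and `Γ_m` is
  a cone. Hence `Γ_m` is connected and lies in the component of `𝟙` (`starConvex_GammaCone`).
* `Γ_m` is open, and relatively closed in `{σ_m > 0}`: at a point `k` of its closure, `σ_j(k) ≥ 0`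
  for `j ≤ m`. If also `σ_m(k) > 0`, then `Q_m` is positive on `[0, ∞)`; by Rolle's theorem it is
  real-rooted, so all its roots are negative and all its coefficients, hence all `σ_j(k)` with
  `j ≤ m`, are positive (`mem_GammaCone_of_nonneg`).
-/

/-- The j-th elementary symmetric function of k = (k₁, …, k_n) ∈ ℝⁿ. -/
noncomputable def esymm (n j : ℕ) (k : Fin n → ℝ) : ℝ :=
  ∑ s ∈ Finset.powersetCard j (Finset.univ : Finset (Fin n)), ∏ i ∈ s, k i

/-- The cone Γ_m := {k ∈ ℝⁿ : σ_j(k) > 0 for all 1 ≤ j ≤ m}. -/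
def GammaCone (n m : ℕ) : Set (Fin n → ℝ) :=
  {k | ∀ j, 1 ≤ j → j ≤ m → 0 < esymm n j k}

open Polynomial

/-- A real-rooted polynomial has a real-rooted derivative, by Rolle's theorem. -/
lemma splits_derivative_real {p : ℝ[X]} (hp : p.Splits) : (derivative p).Splits := by
  rw [splits_iff_card_roots] at hp ⊢
  have h1 := card_roots_le_derivative p
  have h2 := card_roots' (derivative p)
  have h3 := natDegree_derivative_le p
  by_cases h0 : p.natDegree = 0
  · have : derivative p = 0 := derivative_of_natDegree_zero h0
    simp [this]
  · omega

lemma splits_hasseDeriv_real {p : ℝ[X]} (hp : p.Splits) (d : ℕ) : (hasseDeriv d p).Splits := by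
  have h : ∀ d, (derivative^[d] p).Splits := by
    intro d
    induction d with
    | zero => exact hp
    | succ d ih =>
      rw [Function.iterate_succ_apply']
      exact splits_derivative_real ih
  have hd := h d
  have hf : ((d.factorial : ℕ) : ℝ) ≠ 0 := by exact_mod_cast d.factorial_ne_zero
  have : hasseDeriv d p = C ((d.factorial : ℝ)⁻¹) * derivative^[d] p := by
    rw [← factorial_smul_hasseDeriv, LinearMap.smul_apply, nsmul_eq_mul, ← C_eq_natCast,
      ← mul_assoc, ← C_mul, inv_mul_cancel₀ hf, C_1, one_mul]
  rw [this]
  exact (Splits.C _).mul hd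

lemma eval_pos_of_coeff {q : ℝ[X]} (h : ∀ i, 0 ≤ q.coeff i) (h0 : 0 < q.coeff 0) {t : ℝ}
    (ht : 0 ≤ t) : 0 < q.eval t := by
  rw [eval_eq_sum_range]
  refine Finset.sum_pos' (fun i _ => mul_nonneg (h i) (pow_nonneg ht i)) ⟨0, by simp, by simpa⟩

lemma coeff_prod_X_sub_C_pos (s : Multiset ℝ) (hs : ∀ r ∈ s, r < 0) (i : ℕ) (hi : i ≤ s.card) :
    0 < ((s.map fun r => X - C r).prod).coeff i := by
  induction s using Multiset.induction_on generalizing i with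
  | empty =>
    obtain rfl : i = 0 := by simpa using hi
    simp
  | cons a s ih =>
    have ha : a < 0 := hs a (by simp)
    have ih' := ih (fun r hr => hs r (by simp [hr]))
    rw [Multiset.map_cons, Multiset.prod_cons, sub_mul]
    cases i with
    | zero =>
      have := ih' 0 (Nat.zero_le _)
      simp only [coeff_sub, mul_coeff_zero, coeff_X_zero, zero_mul, coeff_C_zero]
      nlinarith
    | succ i =>
      rw [coeff_sub, coeff_X_mul, coeff_C_mul]
      have h1 := ih' i (by simpa using hi)
      have h2 : 0 ≤ ((s.map fun r => X - C r).prod).coeff (i + 1) := by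
        by_cases h : i + 1 ≤ s.card
        · exact (ih' _ h).le
        · rw [coeff_eq_zero_of_natDegree_lt]
          rw [natDegree_multiset_prod_X_sub_C_eq_card]
          omega
      nlinarith

/-- A polynomial with nonnegative coefficients and positive constant term is positive on `[0, ∞)`,
so if it is real-rooted then all its roots are negative. -/
lemma coeff_pos_of_splits {q : ℝ[X]} (hq : q.Splits) (h : ∀ i, 0 ≤ q.coeff i)
    (h0 : 0 < q.coeff 0) (i : ℕ) (hi : i ≤ q.natDegree) : 0 < q.coeff i := by
  have hq0 : q ≠ 0 := by rintro rfl; simp at h0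
  have hr : ∀ r ∈ q.roots, r < 0 := by
    intro r hr
    by_contra! hr0
    exact (eval_pos_of_coeff h h0 hr0).ne' (isRoot_of_mem_roots hr)
  have hl : 0 < q.leadingCoeff :=
    lt_of_le_of_ne (h _) (leadingCoeff_ne_zero.mpr hq0).symm
  rw [hq.eq_prod_roots, coeff_C_mul]
  exact mul_pos hl (coeff_prod_X_sub_C_pos _ hr i (by rwa [splits_iff_card_roots.mp hq]))

/-- The polynomial `∏ (X + k_i)`. -/
noncomputable def genPoly (n : ℕ) (k : Fin n → ℝ) : ℝ[X] := ∏ i, (X + C (k i))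

lemma natDegree_genPoly (n : ℕ) (k : Fin n → ℝ) : (genPoly n k).natDegree = n := by
  simp [genPoly, natDegree_prod_of_monic _ _ (fun i _ => monic_X_add_C (k i))]

lemma splits_genPoly (n : ℕ) (k : Fin n → ℝ) : (genPoly n k).Splits :=
  Splits.prod fun i _ => Splits.X_add_C (k i)

lemma coeff_genPoly {n j : ℕ} (k : Fin n → ℝ) (hj : j ≤ n) :
    (genPoly n k).coeff (n - j) = esymm n j k := by
  rw [genPoly, Finset.prod_X_add_C_coeff _ _ (by simp), esymm, Finset.card_univ, Fintype.card_fin,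
    Nat.sub_sub_self hj]

lemma coeff_hasseDeriv_genPoly {n j i : ℕ} (k : Fin n → ℝ) (hj : j ≤ n) (hi : i ≤ j) :
    (hasseDeriv (n - j) (genPoly n k)).coeff (j - i) =
      ((n - i).choose (n - j) : ℝ) * esymm n i k := by
  rw [hasseDeriv_coeff, show j - i + (n - j) = n - i by omega, coeff_genPoly k (hi.trans hj)]

lemma natDegree_hasseDeriv_genPoly {n j : ℕ} (k : Fin n → ℝ) (hj : j ≤ n) :
    (hasseDeriv (n - j) (genPoly n k)).natDegree = j := by
  rw [natDegree_hasseDeriv, natDegree_genPoly, Nat.sub_sub_self hj]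

/-- `σ_j(k + t𝟙)` is the polynomial `P_k^{(n - j)} / (n - j)!` in `t`, by Taylor expansion of
`P_{k + t𝟙}(X) = P_k(X + t)`. -/
lemma esymm_add_const {n j : ℕ} (k : Fin n → ℝ) (hj : j ≤ n) (t : ℝ) :
    esymm n j (fun i => k i + t) = (hasseDeriv (n - j) (genPoly n k)).eval t := by
  rw [← taylor_coeff, ← coeff_genPoly _ hj]
  congr 1
  simp only [genPoly, taylor_apply, prod_comp, add_comp, X_comp, C_comp, C_add]
  exact Finset.prod_congr rfl fun i _ => by ring

lemma esymm_zero (n : ℕ) (k : Fin n → ℝ) : esymm n 0 k = 1 := by simp [esymm]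

lemma coeff_hasseDeriv_genPoly_nonneg {n j : ℕ} (k : Fin n → ℝ) (hj : j ≤ n)
    (h : ∀ i, 1 ≤ i → i ≤ j → 0 ≤ esymm n i k) (l : ℕ) :
    0 ≤ (hasseDeriv (n - j) (genPoly n k)).coeff l := by
  by_cases hl : l ≤ j
  · have := coeff_hasseDeriv_genPoly k hj (Nat.sub_le j l)
    rw [Nat.sub_sub_self hl] at this
    rw [this]
    refine mul_nonneg (Nat.cast_nonneg _) ?_
    rcases Nat.eq_zero_or_pos (j - l) with h0 | h0
    · rw [h0, esymm_zero]; exact zero_le_one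
    · exact h _ h0 (Nat.sub_le j l)
  · rw [coeff_eq_zero_of_natDegree_lt]
    rw [natDegree_hasseDeriv_genPoly k hj]
    omega

lemma coeff_zero_hasseDeriv_genPoly {n j : ℕ} (k : Fin n → ℝ) (hj : j ≤ n) :
    (hasseDeriv (n - j) (genPoly n k)).coeff 0 = esymm n j k := by
  simpa using coeff_hasseDeriv_genPoly k hj le_rfl

/-- On the closure of `Γ_m`, positivity of `σ_m` alone forces membership in `Γ_m`. -/
lemma mem_GammaCone_of_nonneg {n m : ℕ} (hmn : m ≤ n) {k : Fin n → ℝ}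
    (h : ∀ i, 1 ≤ i → i ≤ m → 0 ≤ esymm n i k) (hm : 0 < esymm n m k) : k ∈ GammaCone n m := by
  intro j _ hj
  have hpos := coeff_pos_of_splits (splits_hasseDeriv_real (splits_genPoly n k) (n - m))
    (coeff_hasseDeriv_genPoly_nonneg k hmn h) (by rwa [coeff_zero_hasseDeriv_genPoly k hmn])
    (m - j) (by rw [natDegree_hasseDeriv_genPoly k hmn]; omega)
  rw [coeff_hasseDeriv_genPoly k hmn hj] at hpos
  exact pos_of_mul_pos_right hpos (Nat.cast_nonneg _)

lemma add_const_mem_GammaCone {n m : ℕ} (hmn : m ≤ n) {k : Fin n → ℝ} (hk : k ∈ GammaCone n m)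
    {t : ℝ} (ht : 0 ≤ t) : (fun i => k i + t) ∈ GammaCone n m := by
  intro j hj1 hj
  rw [esymm_add_const k (hj.trans hmn)]
  refine eval_pos_of_coeff (coeff_hasseDeriv_genPoly_nonneg k (hj.trans hmn)
    fun i hi1 hi => (hk i hi1 (hi.trans hj)).le) ?_ ht
  rw [coeff_zero_hasseDeriv_genPoly k (hj.trans hmn)]
  exact hk j hj1 hj

lemma esymm_smul (n j : ℕ) (b : ℝ) (k : Fin n → ℝ) : esymm n j (b • k) = b ^ j * esymm n j k := by
  rw [esymm, esymm, Finset.mul_sum]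
  refine Finset.sum_congr rfl fun s hs => ?_
  simp [Finset.prod_mul_distrib, (Finset.mem_powersetCard.mp hs).2]

lemma one_mem_GammaCone {n m : ℕ} (hmn : m ≤ n) : (fun _ => (1 : ℝ)) ∈ GammaCone n m := by
  intro j _ hj
  simpa [esymm] using Nat.choose_pos (hj.trans hmn)

lemma starConvex_GammaCone {n m : ℕ} (hmn : m ≤ n) :
    StarConvex ℝ (fun _ => (1 : ℝ)) (GammaCone n m) := by
  intro k hk a b ha hb hab
  rcases hb.eq_or_lt with rfl | hb
  · obtain rfl : a = 1 := by linarith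
    simpa using one_mem_GammaCone hmn
  · have h : a • (fun _ => (1 : ℝ)) + b • k = b • (fun i => k i + a / b) := by
      ext i
      simp only [Pi.add_apply, Pi.smul_apply, smul_eq_mul]
      field_simp
      ring
    rw [h]
    intro j hj1 hj
    rw [esymm_smul]
    exact mul_pos (pow_pos hb j) (add_const_mem_GammaCone hmn hk (by positivity) j hj1 hj)

lemma continuous_esymm (n j : ℕ) : Continuous (esymm n j) := by
  unfold esymm
  fun_prop

lemma isOpen_GammaCone (n m : ℕ) : IsOpen (GammaCone n m) := by
  have : GammaCone n m = ⋂ j ∈ Finset.Icc 1 m, {k | 0 < esymm n j k} := by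
    ext k
    simp [GammaCone]
  rw [this]
  exact isOpen_biInter_finset fun j _ => isOpen_lt continuous_const (continuous_esymm n j)

/-- For every n ≥ 1 and 1 ≤ m ≤ n, Γ_m equals the connected
component of {k ∈ ℝⁿ : σ_m(k) > 0} containing the point (1, 1, …, 1)
(equivalently, containing the positive orthant Γ_n). -/
theorem stmt_7 (n m : ℕ) (hn : 1 ≤ n) (hm : 1 ≤ m) (hmn : m ≤ n) :
    GammaCone n m =
      connectedComponentIn {k : Fin n → ℝ | 0 < esymm n m k}
        (fun _ => (1 : ℝ)) := by
  have h1 := one_mem_GammaCone hmn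
  refine Set.Subset.antisymm ?_ ?_
  · exact ((starConvex_GammaCone hmn).isPathConnected
      h1).isConnected.isPreconnected.subset_connectedComponentIn h1 fun k hk => hk m hm le_rfl
  · refine isPreconnected_connectedComponentIn.subset_of_closure_inter_subset
      (isOpen_GammaCone n m) ⟨_, mem_connectedComponentIn (h1 m hm le_rfl), h1⟩ ?_
    rintro k ⟨hk, hkC⟩
    have hkm : k ∈ {k : Fin n → ℝ | 0 < esymm n m k} := connectedComponentIn_subset _ _ hkC
    refine mem_GammaCone_of_nonneg hmn (fun i hi1 hi => ?_) hkm
    exact closure_minimal (fun x hx => (hx i hi1 hi).le)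
      (isClosed_le continuous_const (continuous_esymm n i)) hk
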